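/- Let Φ be a 4×2 real matrix with orthonormal columns (Φᵀ Φ = I₂). For a 2-element subset S of {1,2,3,4}, let Φ_S denote the 2×2 matrix formed by the rows of Φ indexed by S. Then there exists a 2-element subset S of {1,2,3,4} and a nonzero vector u ∈ ℤ² such that ‖Φ_S u‖² ≤ 1/3. -/

import Mathlib

open Matrix

/-- The `k × k` submatrix of `Φ` formed by the rows indexed by the `k`-element subset `S`. -/
def rowsSub {n k : ℕ} (Φ : Matrix (Fin n) (Fin k) ℝ)
    (S : {s : Finset (Fin n) // s.card = k}) : Matrix (Fin k) (Fin k) ℝ :=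
  fun i j => Φ ((S.1.orderIsoOfFin S.2 i : Fin n)) j

/-- Squared Euclidean norm of a vector in `ℝ^k`. -/
def sqnorm {k : ℕ} (x : Fin k → ℝ) : ℝ := ∑ i, x i ^ 2

/-!
Let `a`, `b` be the columns of `Φ` and `p k = a k * b k`, so `∑ p = 0`, and suppose that every
child vector has squared length greater than `1 / 3`. Testing `(1, 0)` and `(0, 1)` puts the weights
`s = a ^ 2` and `t = b ^ 2` in the interior of a polytope, a cube in suitable coordinates.
Functions concave in `s` and in `t` separately are bounded below on it by their values at pairs of
vertices. Applied to `∑ √(s k) * √(t k)` this gives `2 / 3 ≤ ∑ |p k|`; applied to a corrected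
version of the same sum over `k ≠ l` it gives `|p l| < ∑_{k ≠ l} |p k|`. The latter forces exactly
two of the `p k` to be nonnegative. If `S` is the pair where they are, testing `(1, -1)` on `S` and
`(1, 1)` on `Sᶜ` gives `2 / 3 < 2 - 2 * ∑ |p k|`, which contradicts `2 / 3 ≤ ∑ |p k|`.
-/

open Finset

lemma sqnorm_rowsSub_mulVec {n k : ℕ} (Φ : Matrix (Fin n) (Fin k) ℝ)
    (S : {s : Finset (Fin n) // s.card = k}) (x : Fin k → ℝ) :
    sqnorm (rowsSub Φ S *ᵥ x) = ∑ i ∈ S.1, (Φ *ᵥ x) i ^ 2 := by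
  rw [← sum_coe_sort S.1, ← Equiv.sum_comp (S.1.orderIsoOfFin S.2).toEquiv]
  rfl

lemma le_of_biconcaveOn_convexHull {E F : Type*} [AddCommGroup E] [Module ℝ E] [AddCommGroup F]
    [Module ℝ F] {V : Set E} {W : Set F} {f : E → F → ℝ} {c : ℝ}
    (hleft : ∀ t ∈ convexHull ℝ W, ConcaveOn ℝ (convexHull ℝ V) fun s => f s t)
    (hright : ∀ v ∈ V, ConcaveOn ℝ (convexHull ℝ W) (f v))
    (hvertex : ∀ v ∈ V, ∀ w ∈ W, c ≤ f v w) {s : E} (hs : s ∈ convexHull ℝ V) {t : F}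
    (ht : t ∈ convexHull ℝ W) : c ≤ f s t := by
  obtain ⟨v, hv, hvs⟩ := (hleft t ht).exists_le_of_mem_convexHull (subset_convexHull ℝ V) hs
  obtain ⟨w, hw, hwt⟩ := (hright v hv).exists_le_of_mem_convexHull (subset_convexHull ℝ W) ht
  exact (hvertex v hv w hw).trans (hwt.trans hvs)

lemma concaveOn_finset_sum {ι E : Type*} [AddCommGroup E] [Module ℝ E] {A : Set E}
    (hA : Convex ℝ A) (I : Finset ι) {f : ι → E → ℝ} (hf : ∀ i ∈ I, ConcaveOn ℝ A (f i)) :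
    ConcaveOn ℝ A fun x => ∑ i ∈ I, f i x := by
  classical
  induction I using Finset.induction_on with
  | empty => simpa using concaveOn_const 0 hA
  | insert i I hi ih =>
    simp only [sum_insert hi]
    exact (hf i (mem_insert_self i I)).add (ih fun j hj => hf j (mem_insert_of_mem hj))

lemma concaveOn_sqrt_apply_mul {ι : Type*} (k : ι) {c : ℝ} (hc : 0 ≤ c) :
    ConcaveOn ℝ (Set.Ici 0) fun s : ι → ℝ => √(s k) * c := by
  have hsqrt : ConcaveOn ℝ (Set.Ici 0) fun s : ι → ℝ => √(s k) :=
    (Real.strictConcaveOn_sqrt.concaveOn.comp_linearMap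
      (LinearMap.proj (R := ℝ) (φ := fun _ : ι => ℝ) k)).subset
      (fun s (hs : 0 ≤ s) => hs k) (convex_Ici (0 : ι → ℝ))
  simpa only [smul_eq_mul, mul_comm c] using hsqrt.smul hc

lemma convexOn_sub_apply_sub_apply_mul {ι : Type*} {A : Set (ι → ℝ)} (hA : Convex ℝ A)
    (l k : ι) (r c : ℝ) : ConvexOn ℝ A fun s => (r - s l - s k) * c := by
  refine ⟨hA, fun s _ s' _ α β _ _ hαβ => le_of_eq ?_⟩
  simp only [Pi.add_apply, Pi.smul_apply, smul_eq_mul]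
  linear_combination (-r * c) * hαβ

lemma two_mul_mul_div_add_le_sqrt_mul_sqrt {x y : ℝ} (hx : 0 ≤ x) (hy : 0 ≤ y) :
    2 * x * y / (x + y) ≤ √x * √y := by
  rcases (add_nonneg hx hy).eq_or_lt with h | h
  · rw [← h, div_zero]
    positivity
  · rw [div_le_iff₀ h]
    have hamgm : 2 * √x * √y ≤ x + y := by
      simpa only [Real.sq_sqrt hx, Real.sq_sqrt hy] using two_mul_le_add_sq √x √y
    calc 2 * x * y = √x * √y * (2 * √x * √y) := by
          linear_combination (-2 * y) * Real.sq_sqrt hx - 2 * √x ^ 2 * Real.sq_sqrt hy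
      _ ≤ √x * √y * (x + y) := by gcongr

/-- The weight vectors on four points that sum to `1` and give every pair of points weight at least
`1 / 3`. The squared columns of `Φ` lie here when all `Φ_S e₀` and `Φ_S e₁` are long. -/
def pairPolytope : Set (Fin 4 → ℝ) :=
  {s | ∑ i, s i = 1 ∧ ∀ S : Finset (Fin 4), #S = 2 → 1 / 3 ≤ ∑ i ∈ S, s i}

/-- The weight vector with entry `x` at `i` whose other entries are equal and make the sum `1`. For
`x = 0` and `x = 1 / 2` these are the vertices of `pairPolytope`. -/
noncomputable def peaked (i : Fin 4) (x : ℝ) : Fin 4 → ℝ :=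
  Function.update (fun _ => (1 - x) / 3) i x

/-- The eight vertices of `pairPolytope`: the four permutations of `(0, 1/3, 1/3, 1/3)` and of
`(1/2, 1/6, 1/6, 1/6)`. -/
def pairPolytopeVertices : Set (Fin 4 → ℝ) :=
  {v | ∃ i, ∃ x, (x = 0 ∨ x = 1 / 2) ∧ peaked i x = v}

/-- The weight vector `s` of total weight `1` with `d = (s 0 + s 1, s 0 + s 2, s 0 + s 3)`. In these
coordinates `pairPolytope` is the cube `[1/3, 2/3]³`, because complementary pair sums add to `1`. -/
noncomputable def ofPairSums (d : ℝ × ℝ × ℝ) : Fin 4 → ℝ :=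
  ![(d.1 + d.2.1 + d.2.2 - 1) / 2, (1 + d.1 - d.2.1 - d.2.2) / 2,
    (1 - d.1 + d.2.1 - d.2.2) / 2, (1 - d.1 - d.2.1 + d.2.2) / 2]

lemma convex_preimage_ofPairSums {A : Set (Fin 4 → ℝ)} (hA : Convex ℝ A) :
    Convex ℝ (ofPairSums ⁻¹' A) := by
  intro d hd e he α β hα hβ hαβ
  have hcomb : ofPairSums (α • d + β • e) = α • ofPairSums d + β • ofPairSums e := by
    obtain rfl : β = 1 - α := by linarith
    ext k
    fin_cases k <;> simp [ofPairSums] <;> ring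
  rw [Set.mem_preimage, hcomb]
  exact hA hd he hα hβ hαβ

lemma ofPairSums_mem_pairPolytopeVertices {d : ℝ × ℝ × ℝ}
    (hd : d ∈ ({1 / 3, 2 / 3} : Set ℝ) ×ˢ ({1 / 3, 2 / 3} : Set ℝ) ×ˢ ({1 / 3, 2 / 3} : Set ℝ)) :
    ofPairSums d ∈ pairPolytopeVertices := by
  obtain ⟨x, y, z⟩ := d
  obtain ⟨rfl | rfl, rfl | rfl, rfl | rfl⟩ := hd
  on_goal 1 => refine ⟨0, 0, .inl rfl, ?_⟩
  on_goal 2 => refine ⟨3, 1 / 2, .inr rfl, ?_⟩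
  on_goal 3 => refine ⟨2, 1 / 2, .inr rfl, ?_⟩
  on_goal 4 => refine ⟨1, 0, .inl rfl, ?_⟩
  on_goal 5 => refine ⟨1, 1 / 2, .inr rfl, ?_⟩
  on_goal 6 => refine ⟨2, 0, .inl rfl, ?_⟩
  on_goal 7 => refine ⟨3, 0, .inl rfl, ?_⟩
  on_goal 8 => refine ⟨0, 1 / 2, .inr rfl, ?_⟩
  all_goals
    ext k
    fin_cases k <;> norm_num [peaked, ofPairSums, Function.update, Fin.ext_iff]

lemma sum_le_two_thirds_of_mem_pairPolytope {s : Fin 4 → ℝ} (hs : s ∈ pairPolytope)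
    {S : Finset (Fin 4)} (hS : #S = 2) : ∑ i ∈ S, s i ≤ 2 / 3 := by
  have hcompl := hs.2 Sᶜ (by simp [card_compl, hS])
  linarith [sum_add_sum_compl S s, hs.1]

lemma pairPolytope_subset_convexHull : pairPolytope ⊆ convexHull ℝ pairPolytopeVertices := by
  intro s hs
  have hpair {i j : Fin 4} (hij : i ≠ j) : s i + s j ∈ convexHull ℝ ({1 / 3, 2 / 3} : Set ℝ) := by
    rw [convexHull_pair, segment_eq_Icc (by norm_num), ← sum_pair hij]
    exact ⟨hs.2 _ (card_pair hij), sum_le_two_thirds_of_mem_pairPolytope hs (card_pair hij)⟩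
  have hchart : ofPairSums (s 0 + s 1, s 0 + s 2, s 0 + s 3) = s := by
    have hsum := hs.1
    rw [Fin.sum_univ_four] at hsum
    ext k
    fin_cases k <;> simp [ofPairSums] <;> linarith
  have hcube : (s 0 + s 1, s 0 + s 2, s 0 + s 3) ∈ convexHull ℝ
      (({1 / 3, 2 / 3} : Set ℝ) ×ˢ ({1 / 3, 2 / 3} : Set ℝ) ×ˢ ({1 / 3, 2 / 3} : Set ℝ)) := by
    rw [convexHull_prod, convexHull_prod]
    exact ⟨hpair (by decide), hpair (by decide), hpair (by decide)⟩
  have hvertices :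
      ({1 / 3, 2 / 3} : Set ℝ) ×ˢ ({1 / 3, 2 / 3} : Set ℝ) ×ˢ ({1 / 3, 2 / 3} : Set ℝ) ⊆
        ofPairSums ⁻¹' convexHull ℝ pairPolytopeVertices := fun _ hd =>
    subset_convexHull ℝ pairPolytopeVertices (ofPairSums_mem_pairPolytopeVertices hd)
  rw [← hchart]
  exact convexHull_min hvertices (convex_preimage_ofPairSums (convex_convexHull ℝ _)) hcube

lemma pairPolytopeVertices_subset_Ici : pairPolytopeVertices ⊆ Set.Ici 0 := by
  rintro _ ⟨i, x, hx, rfl⟩ k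
  rcases eq_or_ne k i with rfl | hki <;> rcases hx with rfl | rfl <;> norm_num [peaked, *]

lemma convexHull_pairPolytopeVertices_subset_Ici :
    convexHull ℝ pairPolytopeVertices ⊆ Set.Ici 0 :=
  convexHull_min pairPolytopeVertices_subset_Ici (convex_Ici 0)

lemma le_of_biconcaveOn_pairPolytope {f : (Fin 4 → ℝ) → (Fin 4 → ℝ) → ℝ} {c : ℝ}
    (hsymm : ∀ s t, f s t = f t s) (hconcave : ∀ t, ConcaveOn ℝ (Set.Ici 0) fun s => f s t)
    (hvertex : ∀ i j, ∀ x y : ℝ, (x = 0 ∨ x = 1 / 2) → (y = 0 ∨ y = 1 / 2) →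
      c ≤ f (peaked i x) (peaked j y))
    {s t : Fin 4 → ℝ} (hs : s ∈ pairPolytope) (ht : t ∈ pairPolytope) : c ≤ f s t := by
  have hconcave' (t) : ConcaveOn ℝ (convexHull ℝ pairPolytopeVertices) fun s => f s t :=
    (hconcave t).subset convexHull_pairPolytopeVertices_subset_Ici (convex_convexHull ℝ _)
  refine le_of_biconcaveOn_convexHull (fun t _ => hconcave' t)
    (fun v _ => ?_) ?_ (pairPolytope_subset_convexHull hs) (pairPolytope_subset_convexHull ht)
  · rw [funext (hsymm v)]
    exact hconcave' v
  · rintro _ ⟨i, x, hx, rfl⟩ _ ⟨j, y, hy, rfl⟩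
    exact hvertex i j x y hx hy

lemma sum_peaked_self (g : ℝ → ℝ → ℝ) (i : Fin 4) (x y : ℝ) :
    ∑ k, g (peaked i x k) (peaked i y k) = g x y + 3 * g ((1 - x) / 3) ((1 - y) / 3) := by
  rw [Fintype.sum_eq_add_sum_compl i, sum_congr rfl (g := fun _ => g ((1 - x) / 3) ((1 - y) / 3))]
  · simp [peaked, card_compl]
  · intro k hk
    simp_all [peaked]

lemma sum_peaked_of_ne (g : ℝ → ℝ → ℝ) {i j : Fin 4} (hij : i ≠ j) (x y : ℝ) :
    ∑ k, g (peaked i x k) (peaked j y k) =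
      g x ((1 - y) / 3) + g ((1 - x) / 3) y + 2 * g ((1 - x) / 3) ((1 - y) / 3) := by
  rw [← sum_add_sum_compl {i, j}, sum_pair hij,
    sum_congr (s₁ := {i, j}ᶜ) rfl (g := fun _ => g ((1 - x) / 3) ((1 - y) / 3))]
  · simp [peaked, card_compl, hij, hij.symm]
  · intro k hk
    simp_all [peaked]

lemma peaked_nonneg {x : ℝ} (hx : x = 0 ∨ x = 1 / 2) (i k : Fin 4) : 0 ≤ peaked i x k :=
  pairPolytopeVertices_subset_Ici ⟨i, x, hx, rfl⟩ k

lemma two_thirds_le_sum_sqrt_mul_sqrt {s t : Fin 4 → ℝ} (hs : s ∈ pairPolytope)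
    (ht : t ∈ pairPolytope) : 2 / 3 ≤ ∑ k, √(s k) * √(t k) := by
  refine le_of_biconcaveOn_pairPolytope (f := fun s t => ∑ k, √(s k) * √(t k))
    (fun s t => sum_congr rfl fun k _ => mul_comm _ _)
    (fun t => concaveOn_finset_sum (convex_Ici 0) _ fun k _ =>
      concaveOn_sqrt_apply_mul k (Real.sqrt_nonneg _)) (fun i j x y hx hy => ?_) hs ht
  -- Replacing the geometric means by harmonic means leaves a check in rational numbers.
  refine le_trans ?_ (sum_le_sum fun k _ => two_mul_mul_div_add_le_sqrt_mul_sqrt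
    (peaked_nonneg hx i k) (peaked_nonneg hy j k))
  rcases eq_or_ne i j with rfl | hij
  · rw [sum_peaked_self fun a b => 2 * a * b / (a + b)]
    rcases hx with rfl | rfl <;> rcases hy with rfl | rfl <;> norm_num
  · rw [sum_peaked_of_ne (fun a b => 2 * a * b / (a + b)) hij]
    rcases hx with rfl | rfl <;> rcases hy with rfl | rfl <;> norm_num

lemma half_add_le_sum_compl_peaked (l i j : Fin 4) {x y : ℝ} (hx : x = 0 ∨ x = 1 / 2)
    (hy : y = 0 ∨ y = 1 / 2) :
    (peaked i x l + peaked j y l) / 2 ≤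
      ∑ k ∈ {l}ᶜ, (2 * peaked i x k * peaked j y k / (peaked i x k + peaked j y k) -
        (2 / 3 - peaked i x l - peaked i x k) * (2 / 3 - peaked j y l - peaked j y k)) := by
  let g (p q a b : ℝ) : ℝ := 2 * a * b / (a + b) - (2 / 3 - p - a) * (2 / 3 - q - b)
  suffices h : ∀ p q, p = peaked i x l → q = peaked j y l →
      (p + q) / 2 + g p q p q ≤ ∑ k, g p q (peaked i x k) (peaked j y k) by
    have hl := h _ _ rfl rfl
    rw [Fintype.sum_eq_add_sum_compl l] at hl
    linarith
  rintro p q rfl rfl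
  rcases eq_or_ne i j with rfl | hij
  · rw [sum_peaked_self]
    rcases eq_or_ne l i with rfl | hli <;>
    simp only [g, peaked, Function.update_self, Function.update_of_ne, *, ne_eq,
      not_false_eq_true] <;>
    rcases hx with rfl | rfl <;> rcases hy with rfl | rfl <;> norm_num
  · rw [sum_peaked_of_ne _ hij]
    rcases eq_or_ne l i with rfl | hli <;> [skip; rcases eq_or_ne l j with rfl | hlj] <;>
    simp only [g, peaked, Function.update_self, Function.update_of_ne, *, ne_eq,
      not_false_eq_true] <;>
    rcases hx with rfl | rfl <;> rcases hy with rfl | rfl <;> norm_num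

-- The correction term is affine in each of `s` and `t`, so concavity survives; it is positive when
-- all pair sums exceed `1 / 3`, which is what makes `sqrt_mul_sqrt_lt_sum_compl` strict.
lemma half_add_le_sum_compl_sqrt_mul_sqrt {s t : Fin 4 → ℝ} (hs : s ∈ pairPolytope)
    (ht : t ∈ pairPolytope) (l : Fin 4) :
    (s l + t l) / 2 ≤
      ∑ k ∈ {l}ᶜ, (√(s k) * √(t k) - (2 / 3 - s l - s k) * (2 / 3 - t l - t k)) := by
  refine sub_nonneg.mp <| le_of_biconcaveOn_pairPolytope
    (f := fun s t => ∑ k ∈ {l}ᶜ, (√(s k) * √(t k) - (2 / 3 - s l - s k) * (2 / 3 - t l - t k)) -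
      (s l + t l) / 2) (fun s t => ?_) (fun t => ?_) (fun i j x y hx hy => ?_) hs ht
  · simp only [mul_comm, add_comm]
  · have hlinear : ConvexOn ℝ (Set.Ici 0) fun s : Fin 4 → ℝ => (s l + t l) / 2 := by
      refine ⟨convex_Ici 0, fun s _ s' _ α β _ _ hαβ => le_of_eq ?_⟩
      simp only [Pi.add_apply, Pi.smul_apply, smul_eq_mul]
      linear_combination (-t l / 2) * hαβ
    exact (concaveOn_finset_sum (convex_Ici 0) _ fun k _ =>
      (concaveOn_sqrt_apply_mul k (Real.sqrt_nonneg _)).sub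
        (convexOn_sub_apply_sub_apply_mul (convex_Ici 0) l k _ _)).sub hlinear
  · refine sub_nonneg.mpr <| (half_add_le_sum_compl_peaked l i j hx hy).trans ?_
    gcongr with k
    exact two_mul_mul_div_add_le_sqrt_mul_sqrt (peaked_nonneg hx i k) (peaked_nonneg hy j k)

lemma sqrt_mul_sqrt_lt_sum_compl {s t : Fin 4 → ℝ} (hs : ∑ i, s i = 1) (ht : ∑ i, t i = 1)
    (hs_pair : ∀ S : Finset (Fin 4), #S = 2 → 1 / 3 < ∑ i ∈ S, s i)
    (ht_pair : ∀ S : Finset (Fin 4), #S = 2 → 1 / 3 < ∑ i ∈ S, t i) (l : Fin 4) :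
    √(s l) * √(t l) < ∑ k ∈ {l}ᶜ, √(s k) * √(t k) := by
  have hsP : s ∈ pairPolytope := ⟨hs, fun S hS => (hs_pair S hS).le⟩
  have htP : t ∈ pairPolytope := ⟨ht, fun S hS => (ht_pair S hS).le⟩
  have hgap {r : Fin 4 → ℝ} (hr : ∑ i, r i = 1)
      (hr_pair : ∀ S : Finset (Fin 4), #S = 2 → 1 / 3 < ∑ i ∈ S, r i) {k : Fin 4} (hk : l ≠ k) :
      0 < 2 / 3 - r l - r k := by
    have hcompl := hr_pair {l, k}ᶜ (by simp [card_compl, hk])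
    linarith [sum_add_sum_compl {l, k} r, sum_pair hk (f := r)]
  have hnonneg {r : Fin 4 → ℝ} (hr : r ∈ pairPolytope) : 0 ≤ r l :=
    convexHull_pairPolytopeVertices_subset_Ici (pairPolytope_subset_convexHull hr) l
  calc √(s l) * √(t l) ≤ (s l + t l) / 2 := by
        have hamgm := two_mul_le_add_sq √(s l) √(t l)
        rw [Real.sq_sqrt (hnonneg hsP), Real.sq_sqrt (hnonneg htP)] at hamgm
        linarith
    _ ≤ ∑ k ∈ {l}ᶜ, (√(s k) * √(t k) - (2 / 3 - s l - s k) * (2 / 3 - t l - t k)) :=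
        half_add_le_sum_compl_sqrt_mul_sqrt hsP htP l
    _ < ∑ k ∈ {l}ᶜ, √(s k) * √(t k) := by
        refine sum_lt_sum_of_nonempty (by simp [← card_pos, card_compl]) fun k hk => ?_
        have hlk : l ≠ k := by simpa [eq_comm] using hk
        exact sub_lt_self _ (mul_pos (hgap hs hs_pair hlk) (hgap ht ht_pair hlk))

lemma one_lt_card_of_abs_lt_sum_compl {ι R : Type*} [Fintype ι] [DecidableEq ι] [Nonempty ι]
    [AddCommGroup R] [LinearOrder R] [IsOrderedAddMonoid R] {p : ι → R}
    (hp : ∀ i, |p i| < ∑ k ∈ {i}ᶜ, |p k|) (hsum : ∑ i, p i = 0) {S : Finset ι}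
    (hS : ∀ k ∉ S, p k ≤ 0) : 1 < #S := by
  by_contra! hcard
  obtain ⟨i, hi⟩ := card_le_one_iff_subset_singleton.mp hcard
  refine (hp i).not_ge ?_
  calc ∑ k ∈ {i}ᶜ, |p k| = -∑ k ∈ {i}ᶜ, p k := by
        rw [← sum_neg_distrib]
        exact sum_congr rfl fun k hk => abs_of_nonpos (hS k fun hkS => mem_compl.mp hk (hi hkS))
    _ = p i := by
        rw [Fintype.sum_eq_add_sum_compl i] at hsum
        exact (eq_neg_of_add_eq_zero_left hsum).symm
    _ ≤ |p i| := le_abs_self _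

lemma exists_sum_abs_eq_two_mul_sum {ι R : Type*} [Fintype ι] [DecidableEq ι] [Nonempty ι]
    [CommRing R] [LinearOrder R] [IsStrictOrderedRing R] {p : ι → R}
    (hp : ∀ i, |p i| < ∑ k ∈ {i}ᶜ, |p k|) (hsum : ∑ i, p i = 0) :
    ∃ S : Finset ι, 1 < #S ∧ 1 < #Sᶜ ∧ ∑ i, |p i| = 2 * ∑ i ∈ S, p i := by
  let S : Finset ι := {k | 0 ≤ p k}
  have hS {k} (hk : k ∈ S) : 0 ≤ p k := (mem_filter.mp hk).2
  have hSc {k} (hk : k ∉ S) : p k ≤ 0 :=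
    le_of_not_ge fun hk' => hk (mem_filter.mpr ⟨mem_univ k, hk'⟩)
  refine ⟨S, one_lt_card_of_abs_lt_sum_compl hp hsum fun k => hSc, ?_, ?_⟩
  · exact one_lt_card_of_abs_lt_sum_compl (p := -p) (by simpa using hp) (by simpa using hsum)
      fun k hk => neg_nonpos.mpr (hS (notMem_compl.mp hk))
  · rw [← sum_add_sum_compl S, sum_congr rfl fun k hk => abs_of_nonneg (hS hk),
      sum_congr rfl fun k hk => abs_of_nonpos (hSc (mem_compl.mp hk)), sum_neg_distrib]
    linarith [sum_add_sum_compl S p]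

lemma exists_pair_sum_sq_le {a b : Fin 4 → ℝ} (ha : ∑ i, a i ^ 2 = 1) (hb : ∑ i, b i ^ 2 = 1)
    (hab : ∑ i, a i * b i = 0) :
    ∃ S : Finset (Fin 4), #S = 2 ∧ ∃ u : Fin 2 → ℤ, u ≠ 0 ∧
      ∑ i ∈ S, (a i * u 0 + b i * u 1) ^ 2 ≤ 1 / 3 := by
  by_contra! hlong
  have ha_pair (S : Finset (Fin 4)) (hS : #S = 2) : 1 / 3 < ∑ i ∈ S, a i ^ 2 := by
    simpa using hlong S hS ![1, 0] (by simp)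
  have hb_pair (S : Finset (Fin 4)) (hS : #S = 2) : 1 / 3 < ∑ i ∈ S, b i ^ 2 := by
    simpa using hlong S hS ![0, 1] (by simp)
  have habs (k : Fin 4) : |a k * b k| = √(a k ^ 2) * √(b k ^ 2) := by
    rw [Real.sqrt_sq_eq_abs, Real.sqrt_sq_eq_abs, abs_mul]
  have hdominated (i : Fin 4) : |a i * b i| < ∑ k ∈ {i}ᶜ, |a k * b k| := by
    simpa only [habs] using sqrt_mul_sqrt_lt_sum_compl ha hb ha_pair hb_pair i
  obtain ⟨S, hS, hSc, hsum_abs⟩ := exists_sum_abs_eq_two_mul_sum hdominated hab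
  have hcard : #S + #Sᶜ = 4 := card_add_card_compl S
  have hlower : 2 / 3 ≤ ∑ k, |a k * b k| := by
    simpa only [habs] using two_thirds_le_sum_sqrt_mul_sqrt
      ⟨ha, fun S hS => (ha_pair S hS).le⟩ ⟨hb, fun S hS => (hb_pair S hS).le⟩
  have hexpand (T : Finset (Fin 4)) (ε : ℝ) : ∑ i ∈ T, (a i + b i * ε) ^ 2 =
      ∑ i ∈ T, a i ^ 2 + 2 * ε * ∑ i ∈ T, a i * b i + ε ^ 2 * ∑ i ∈ T, b i ^ 2 := by
    simp only [mul_sum, ← sum_add_distrib]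
    exact sum_congr rfl fun i _ => by ring
  have hdiff : 1 / 3 < ∑ i ∈ S, (a i + b i * (-1)) ^ 2 := by
    simpa using hlong S (by lia) ![1, -1] (by simp)
  have hsum : 1 / 3 < ∑ i ∈ Sᶜ, (a i + b i * 1) ^ 2 := by
    simpa using hlong Sᶜ (by lia) ![1, 1] (by simp)
  rw [hexpand] at hdiff hsum
  linarith [sum_add_sum_compl S fun i => a i ^ 2, sum_add_sum_compl S fun i => b i ^ 2,
    sum_add_sum_compl S fun i => a i * b i]

/-- For any `4 × 2` matrix `Φ` with orthonormal columns, some child lattice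
`Φ_S ℤ²` (with `S` a 2-subset of the rows) has a nonzero vector of squared
length at most `1/3`. -/
theorem exists_child_short_vector (Φ : Matrix (Fin 4) (Fin 2) ℝ) (hΦ : Φᵀ * Φ = 1) :
    ∃ S : {s : Finset (Fin 4) // s.card = 2}, ∃ u : Fin 2 → ℤ, u ≠ 0 ∧
      sqnorm ((rowsSub Φ S).mulVec fun j => (u j : ℝ)) ≤ 1 / 3 := by
  have hgram (j j' : Fin 2) : ∑ i, Φ i j * Φ i j' = (1 : Matrix (Fin 2) (Fin 2) ℝ) j j' := by
    rw [← hΦ]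
    rfl
  obtain ⟨S, hS, u, hu, hshort⟩ := exists_pair_sum_sq_le (a := fun i => Φ i 0)
    (b := fun i => Φ i 1) (by simpa [sq] using hgram 0 0) (by simpa [sq] using hgram 1 1)
    (by simpa using hgram 0 1)
  refine ⟨⟨S, hS⟩, u, hu, ?_⟩
  rw [sqnorm_rowsSub_mulVec]
  simpa only [mulVec, dotProduct, Fin.sum_univ_two] using hshort
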